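/- (Slowest candidate trajectory.) Let 𝒜, ℬ, B be n×n matrices over the extended reals ℝ̄, let H = (ℬ^♯ ⊗ 𝒜) ⊕ B, let x(0) ∈ ℝ̄^n, and define x(m) = ℬ^{m'} ⊗' x(0) for m ≥ 0 (min-plus powers of ℬ). Then the following are equivalent: (a) 𝒜 ⊗ x(m-1) ≤ x(m) for all m ≥ 1 and x(m) = B* ⊗ x(m) for all m ≥ 0; (b) H* ⊗ x(m) = x(m) for all m ≥ 0 (i.e. every x(m) lies in the image of H*). -/

import Mathlib

noncomputable section

/-- Max-plus matrix product over the extended reals (`-∞` is absorbing for `+` in `EReal`). -/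
def mpMul {m n p : ℕ} (A : Matrix (Fin m) (Fin n) EReal) (B : Matrix (Fin n) (Fin p) EReal) :
    Matrix (Fin m) (Fin p) EReal :=
  fun i j => ⨆ k, A i k + B k j

/-- Max-plus matrix-vector product. -/
def mpMulVec {m n : ℕ} (A : Matrix (Fin m) (Fin n) EReal) (x : Fin n → EReal) :
    Fin m → EReal :=
  fun i => ⨆ k, A i k + x k

/-- Min-plus addition on `EReal`: `+∞` is absorbing. -/
def mnAdd (a b : EReal) : EReal := -((-a) + (-b))

/-- Min-plus matrix product. -/
def mnMul {m n p : ℕ} (A : Matrix (Fin m) (Fin n) EReal) (B : Matrix (Fin n) (Fin p) EReal) :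
    Matrix (Fin m) (Fin p) EReal :=
  fun i j => ⨅ k, mnAdd (A i k) (B k j)

/-- Min-plus matrix-vector product. -/
def mnMulVec {m n : ℕ} (A : Matrix (Fin m) (Fin n) EReal) (x : Fin n → EReal) :
    Fin m → EReal :=
  fun i => ⨅ k, mnAdd (A i k) (x k)

/-- Conjugate matrix: `(conj A) i j = -(A j i)`. -/
def conjM {m n : ℕ} (A : Matrix (Fin m) (Fin n) EReal) : Matrix (Fin n) (Fin m) EReal :=
  fun i j => -(A j i)

/-- Max-plus identity matrix. -/
def mpId (n : ℕ) : Matrix (Fin n) (Fin n) EReal :=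
  fun i j => if i = j then 0 else ⊥

/-- Min-plus identity matrix. -/
def mnId (n : ℕ) : Matrix (Fin n) (Fin n) EReal :=
  fun i j => if i = j then 0 else ⊤

/-- Max-plus matrix powers. -/
def mpPow {n : ℕ} (A : Matrix (Fin n) (Fin n) EReal) : ℕ → Matrix (Fin n) (Fin n) EReal
  | 0 => mpId n
  | k + 1 => mpMul A (mpPow A k)

/-- Min-plus matrix powers. -/
def mnPow {n : ℕ} (A : Matrix (Fin n) (Fin n) EReal) : ℕ → Matrix (Fin n) (Fin n) EReal
  | 0 => mnId n
  | k + 1 => mnMul A (mnPow A k)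

/-- Max-plus Kleene star: entrywise supremum of all max-plus powers. -/
def mpStar {n : ℕ} (A : Matrix (Fin n) (Fin n) EReal) : Matrix (Fin n) (Fin n) EReal :=
  fun i j => ⨆ k, mpPow A k i j

/-- Min-plus star: entrywise infimum of all min-plus powers. -/
def mnStar {n : ℕ} (A : Matrix (Fin n) (Fin n) EReal) : Matrix (Fin n) (Fin n) EReal :=
  fun i j => ⨅ k, mnPow A k i j

/-- Entrywise maximum of two matrices (`A ⊕ B`). -/
def mSup {m n : ℕ} (A B : Matrix (Fin m) (Fin n) EReal) : Matrix (Fin m) (Fin n) EReal :=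
  fun i j => A i j ⊔ B i j

/-!
Residuation `A^♯ ⊗ y ≤ x ↔ y ≤ A ⊗' x` turns the first condition of (a) into
`(ℬ^♯ ⊗ 𝒜) ⊗ x(m) ≤ x(m)`, because `x(m + 1) = ℬ ⊗' x(m)`. A vector is fixed by a Kleene star `A*`
exactly when `A ⊗ x ≤ x`, so the two conditions of (a) together say `H ⊗ x(m) ≤ x(m)`, that is,
`H* ⊗ x(m) = x(m)`.

Residuation holds for infinite entries too, since the two conventions for `⊤ + ⊥` are dual to each
other. As a left adjoint, `⊗` preserves suprema; this gives its associativity, and that of `⊗'`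
follows by passing to adjoints.
-/

lemma add_le_iff_le_mnAdd_neg (a b c : EReal) : a + b ≤ c ↔ b ≤ mnAdd (-a) c := by
  -- `EReal.sub_nonpos` needs no finiteness hypotheses; both sides become `a + b - c ≤ 0`.
  rw [mnAdd, neg_neg, EReal.le_neg, ← EReal.sub_nonpos, ← EReal.sub_nonpos (x := a + -c),
    sub_eq_add_neg, sub_eq_add_neg, neg_neg, add_right_comm]

lemma gc_add_mnAdd_neg (a : EReal) : GaloisConnection (a + ·) (mnAdd (-a)) :=
  add_le_iff_le_mnAdd_neg a

lemma ereal_add_iSup {ι : Sort*} (a : EReal) (f : ι → EReal) : a + ⨆ i, f i = ⨆ i, a + f i :=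
  (gc_add_mnAdd_neg a).l_iSup

lemma ereal_iSup_add {ι : Sort*} (f : ι → EReal) (a : EReal) : (⨆ i, f i) + a = ⨆ i, f i + a := by
  simp only [add_comm _ a, ereal_add_iSup]

lemma gc_mpMulVec_conjM_mnMulVec {m n : ℕ} (A : Matrix (Fin m) (Fin n) EReal) :
    GaloisConnection (mpMulVec (conjM A)) (mnMulVec A) := fun y x => by
  simp only [Pi.le_def, mpMulVec, conjM, mnMulVec, iSup_le_iff, le_iInf_iff,
    add_le_iff_le_mnAdd_neg, neg_neg]
  exact forall_comm

lemma mpMulVec_mono {m n : ℕ} (A : Matrix (Fin m) (Fin n) EReal) : Monotone (mpMulVec A) :=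
  fun _ _ hxy _ => iSup_mono fun k => add_le_add_right (hxy k) _

lemma mpMulVec_mpMul {m n p : ℕ} (A : Matrix (Fin m) (Fin n) EReal)
    (B : Matrix (Fin n) (Fin p) EReal) (x : Fin p → EReal) :
    mpMulVec (mpMul A B) x = mpMulVec A (mpMulVec B x) := by
  funext i
  simp only [mpMulVec, mpMul, ereal_iSup_add, ereal_add_iSup, add_assoc]
  exact iSup_comm

lemma mpMulVec_mSup {m n : ℕ} (A B : Matrix (Fin m) (Fin n) EReal) (x : Fin n → EReal) :
    mpMulVec (mSup A B) x = mpMulVec A x ⊔ mpMulVec B x := by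
  funext i
  simp only [mpMulVec, mSup, Pi.sup_apply, ← max_add_add_right, iSup_sup_eq]

lemma conjM_mnMul {m n p : ℕ} (A : Matrix (Fin m) (Fin n) EReal)
    (B : Matrix (Fin n) (Fin p) EReal) :
    conjM (mnMul A B) = mpMul (conjM B) (conjM A) := by
  funext i j
  calc -(⨅ k, mnAdd (A j k) (B k i)) = ⨆ k, -mnAdd (A j k) (B k i) :=
        EReal.negOrderIso.map_iInf _
    _ = ⨆ k, -B k i + -A j k := by simp only [mnAdd, neg_neg, add_comm]

lemma mnMulVec_mnMul {m n p : ℕ} (A : Matrix (Fin m) (Fin n) EReal)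
    (B : Matrix (Fin n) (Fin p) EReal) (x : Fin p → EReal) :
    mnMulVec (mnMul A B) x = mnMulVec A (mnMulVec B x) :=
  (gc_mpMulVec_conjM_mnMulVec (mnMul A B)).u_unique
    ((gc_mpMulVec_conjM_mnMulVec A).compose (gc_mpMulVec_conjM_mnMulVec B))
    fun y => by rw [conjM_mnMul, mpMulVec_mpMul, Function.comp_apply]

section KleeneStar

variable {n : ℕ} (A : Matrix (Fin n) (Fin n) EReal) (x : Fin n → EReal)

lemma mpMulVec_mpId : mpMulVec (mpId n) x = x := by
  funext i
  have mpId_add (k : Fin n) : mpId n i k + x k = ⨆ _ : k = i, x k := by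
    by_cases hki : k = i <;> simp [mpId, hki, Ne.symm]
  simp only [mpMulVec, mpId_add, iSup_iSup_eq_left]

lemma mpMulVec_mpPow (k : ℕ) : mpMulVec (mpPow A k) x = (mpMulVec A)^[k] x := by
  induction k with
  | zero => exact mpMulVec_mpId x
  | succ k ih => rw [mpPow, mpMulVec_mpMul, ih, Function.iterate_succ_apply']

lemma mpMulVec_mpStar : mpMulVec (mpStar A) x = ⨆ k, (mpMulVec A)^[k] x := by
  funext i
  simp only [← mpMulVec_mpPow, iSup_apply, mpMulVec, mpStar, ereal_iSup_add]
  exact iSup_comm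

lemma mpMulVec_mpStar_eq_self_iff : mpMulVec (mpStar A) x = x ↔ mpMulVec A x ≤ x := by
  rw [mpMulVec_mpStar]
  refine ⟨fun h => (le_iSup (fun k => (mpMulVec A)^[k] x) 1).trans_eq h, fun h => ?_⟩
  have iterates_antitone := (mpMulVec_mono A).antitone_iterate_of_map_le h
  exact le_antisymm (iSup_le fun k => iterates_antitone k.zero_le)
    (le_iSup (fun k => (mpMulVec A)^[k] x) 0)

end KleeneStar

lemma mpMulVec_mpStar_mSup_conjM_eq_self_iff {m n : ℕ} (𝒜 ℬ : Matrix (Fin m) (Fin n) EReal)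
    (B : Matrix (Fin n) (Fin n) EReal) (x : Fin n → EReal) :
    mpMulVec (mpStar (mSup (mpMul (conjM ℬ) 𝒜) B)) x = x ↔
      mpMulVec 𝒜 x ≤ mnMulVec ℬ x ∧ mpMulVec (mpStar B) x = x := by
  rw [mpMulVec_mpStar_eq_self_iff, mpMulVec_mpStar_eq_self_iff, mpMulVec_mSup, sup_le_iff,
    mpMulVec_mpMul, gc_mpMulVec_conjM_mnMulVec ℬ _ _]

/-- slowest candidate trajectory. -/
theorem slowest_candidate {n : ℕ} (𝒜 ℬ B : Matrix (Fin n) (Fin n) EReal)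
    (x0 : Fin n → EReal) :
    ((∀ m : ℕ, 1 ≤ m →
        mpMulVec 𝒜 (mnMulVec (mnPow ℬ (m - 1)) x0) ≤ mnMulVec (mnPow ℬ m) x0) ∧
      (∀ m : ℕ, mnMulVec (mnPow ℬ m) x0 = mpMulVec (mpStar B) (mnMulVec (mnPow ℬ m) x0))) ↔
      (∀ m : ℕ,
        mpMulVec (mpStar (mSup (mpMul (conjM ℬ) 𝒜) B)) (mnMulVec (mnPow ℬ m) x0) =
          mnMulVec (mnPow ℬ m) x0) := by
  have trajectory_succ (m : ℕ) :
      mnMulVec (mnPow ℬ (m + 1)) x0 = mnMulVec ℬ (mnMulVec (mnPow ℬ m) x0) :=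
    mnMulVec_mnMul ℬ (mnPow ℬ m) x0
  simp only [mpMulVec_mpStar_mSup_conjM_eq_self_iff, ← trajectory_succ, forall_and,
    eq_comm (b := mpMulVec (mpStar B) _)]
  refine and_congr_left fun _ => ⟨fun h m => h (m + 1) m.succ_pos, fun h m hm => ?_⟩
  obtain ⟨k, rfl⟩ := Nat.exists_eq_add_of_le' hm
  exact h k
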